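/- arXiv:1002.2762 — 2 statements merged into one kernel-verified Lean document; each statement's English description precedes it below -/
import Mathlib

section
/- In U the elements v₀, v₁, v₂, v₃ satisfy the q-commutation relations v₀v₁ = q⁻²v₁v₀, v₁v₂ = q⁻²v₂v₁, and v₂v₃ = q⁻²v₃v₂. -/
noncomputable section

abbrev F : Type := RatFunc ℚ

/-- The deformation parameter `q`. -/
def qq : F := RatFunc.X

/-- The quantum integer `[3] = q² + 1 + q⁻²`. -/
def box3 : F := qq ^ 2 + 1 + (qq⁻¹) ^ 2

/-- The generators `E₁, E₂` of the free algebra. -/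
def gen (i : Fin 2) : FreeAlgebra F (Fin 2) := FreeAlgebra.ι F i

/-- The quantized Serre relations. -/
inductive SerreRel : FreeAlgebra F (Fin 2) → FreeAlgebra F (Fin 2) → Prop
  | rel1 : SerreRel
      (gen 0 ^ 3 * gen 1 - box3 • (gen 0 ^ 2 * gen 1 * gen 0)
        + box3 • (gen 0 * gen 1 * gen 0 ^ 2) - gen 1 * gen 0 ^ 3) 0
  | rel2 : SerreRel
      (gen 1 ^ 3 * gen 0 - box3 • (gen 1 ^ 2 * gen 0 * gen 1)
        + box3 • (gen 1 * gen 0 * gen 1 ^ 2) - gen 0 * gen 1 ^ 3) 0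

/-- `U = U_q(𝔫)`, the free algebra on `E₁, E₂` modulo the quantized Serre relations. -/
abbrev U : Type := RingQuot SerreRel

def E1 : U := RingQuot.mkAlgHom F SerreRel (gen 0)
def E2 : U := RingQuot.mkAlgHom F SerreRel (gen 1)

/-- `A = (1/(q+q⁻¹))(E₂E₁ − q⁻²E₁E₂)`. -/
def Aelt : U := (qq + qq⁻¹)⁻¹ • (E2 * E1 - (qq⁻¹) ^ 2 • (E1 * E2))

def v0 : U := E1
def v1 : U := Aelt * v0 - v0 * Aelt
def v2 : U := Aelt * v1 - v1 * Aelt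
def v3 : U := Aelt * v2 - v2 * Aelt

/-- `uᵢ = (1 − q⁻²)⁻²ⁱ vᵢ`. -/
def u0 : U := v0
def u1 : U := ((1 - (qq⁻¹) ^ 2)⁻¹) ^ 2 • v1
def u2 : U := ((1 - (qq⁻¹) ^ 2)⁻¹) ^ 4 • v2
def u3 : U := ((1 - (qq⁻¹) ^ 2)⁻¹) ^ 6 • v3

/-- `p₁ = u₃u₁ − q²u₂²`. -/
def p1 : U := u3 * u1 - qq ^ 2 • u2 ^ 2
/-- `p₀ = u₂u₀ − q²u₁²`. -/
def p0 : U := u2 * u0 - qq ^ 2 • u1 ^ 2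

section generic
variable {K R : Type} [Field K] [Ring R] [Algebra K R]

/-- Derivation step: if `h` commutes with `B` and `[h,x] = d y`, then `[h,[B,x]] = d [B,y]`. -/
theorem aux_step (d : K) (h B x y : R) (hB : h * B - B * h = 0)
    (hx : h * x - x * h = d • y) :
    h * (B * x - x * B) - (B * x - x * B) * h = d • (B * y - y * B) := by
  have e : h * (B * x - x * B) - (B * x - x * B) * h
      = (h * B - B * h) * x - x * (h * B - B * h)
        + (B * (h * x - x * h) - (h * x - x * h) * B) := by noncomm_ring
  rw [e, hB, hx]
  simp only [mul_smul_comm, smul_mul_assoc, smul_sub]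
  simp

/-- Main induction step. -/
theorem aux_ind (p d : K) (h2 : (2 : K) ≠ 0) (hd : d ≠ 0) (h B x0 x1 x2 x3 : R)
    (hB : h * B - B * h = 0)
    (e1 : x1 = B * x0 - x0 * B) (e2 : x2 = B * x1 - x1 * B) (e3 : x3 = B * x2 - x2 * B)
    (hx : h * x0 - x0 * h = d • x2)
    (r : x0 * x1 - p • (x1 * x0) = 0) :
    x1 * x2 - p • (x2 * x1) = 0 := by
  have hx1 : h * x1 - x1 * h = d • x3 := by
    rw [e3, e1]; exact aux_step d h B x0 x2 hB hx
  have k0 : B * x0 = x1 + x0 * B := by rw [e1]; abel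
  have k1 : B * x1 = x2 + x1 * B := by rw [e2]; abel
  have k2 : B * x2 = x3 + x2 * B := by rw [e3]; abel
  have l0 : h * x0 = d • x2 + x0 * h := by rw [← hx]; abel
  have l1 : h * x1 = d • x3 + x1 * h := by rw [← hx1]; abel
  -- apply ad B
  have s1 : x0 * x2 + x1 * x1 - p • (x2 * x0 + x1 * x1) = 0 := by
    have e : x0 * x2 + x1 * x1 - p • (x2 * x0 + x1 * x1)
      = B * (x0 * x1 - p • (x1 * x0)) - (x0 * x1 - p • (x1 * x0)) * B := by
      simp only [mul_sub, sub_mul, mul_smul_comm, smul_mul_assoc, ← mul_assoc, k0, k1, add_mul]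
      simp only [mul_assoc, k0, k1, mul_add]
      module
    rw [e, r]; simp
  have s2 : x0 * x3 + x1 * x2 + (x1 * x2 + x2 * x1) -
      p • (x3 * x0 + x2 * x1 + (x1 * x2 + x2 * x1)) = 0 := by
    have e : x0 * x3 + x1 * x2 + (x1 * x2 + x2 * x1) -
      p • (x3 * x0 + x2 * x1 + (x1 * x2 + x2 * x1))
      = B * (x0 * x2 + x1 * x1 - p • (x2 * x0 + x1 * x1)) -
        (x0 * x2 + x1 * x1 - p • (x2 * x0 + x1 * x1)) * B := by
      simp only [mul_add, mul_sub, sub_mul, mul_smul_comm, smul_mul_assoc, ← mul_assoc, k0, k1, k2,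
        add_mul]
      simp only [mul_assoc, k0, k1, k2, mul_add]
      module
    rw [e, s1]; simp
  have s3 : d • (x0 * x3 + x2 * x1 - p • (x3 * x0 + x1 * x2)) = 0 := by
    have e : d • (x0 * x3 + x2 * x1 - p • (x3 * x0 + x1 * x2))
      = h * (x0 * x1 - p • (x1 * x0)) - (x0 * x1 - p • (x1 * x0)) * h := by
      simp only [mul_add, mul_sub, sub_mul, mul_smul_comm, smul_mul_assoc, ← mul_assoc, l0, l1,
        add_mul]
      simp only [mul_assoc, l0, l1, mul_add, mul_smul_comm]
      module
    rw [e, r]; simp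
  have s4 := (smul_eq_zero_iff_right hd).1 s3
  have s5 : (2 : K) • (x1 * x2 - p • (x2 * x1)) = 0 := by
    have e : (2 : K) • (x1 * x2 - p • (x2 * x1)) =
      (x0 * x3 + x1 * x2 + (x1 * x2 + x2 * x1) -
      p • (x3 * x0 + x2 * x1 + (x1 * x2 + x2 * x1))) -
      (x0 * x3 + x2 * x1 - p • (x3 * x0 + x1 * x2)) := by module
    rw [e, s2, s4, sub_zero]
  exact (smul_eq_zero_iff_right h2).1 s5

/-- The bracket of `ψ` with `x`. -/
theorem aux_psi (q : K) (hq : q ≠ 0) (x y B x1 P : R)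
    (eB : B = y * x - (q⁻¹ ^ 2) • (x * y)) (e1 : x1 = B * x - x * B)
    (eP : P = y * x1 - (q⁻¹ ^ 2) • (x1 * y))
    (r : x * x1 - (q⁻¹ ^ 2) • (x1 * x) = 0) :
    P * x - x * P = q ^ 2 • (B * x1) - (q⁻¹ ^ 2) • (x1 * B) := by
  have e : P * x - x * P - (q ^ 2 • (B * x1) - (q⁻¹ ^ 2) • (x1 * B)) =
    (q⁻¹ ^ 2) • ((x * x1 - (q⁻¹ ^ 2) • (x1 * x)) * y) - q ^ 2 • (y * (x * x1 - (q⁻¹ ^ 2) • (x1 * x))) := by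
    subst eP eB
    clear e1 r
    simp only [mul_add, mul_sub, sub_mul, mul_smul_comm, smul_mul_assoc, mul_assoc, smul_sub]
    match_scalars <;> field_simp <;> ring
  rw [r] at e
  rw [← sub_eq_zero, e]; simp

theorem aux_psi' (q : K) (hq : q ≠ 0) (x y B y1 P : R)
    (eB : B = y * x - (q⁻¹ ^ 2) • (x * y)) (e1 : y1 = y * B - B * y)
    (eP : P = y1 * x - (q⁻¹ ^ 2) • (x * y1))
    (r : y1 * y - (q⁻¹ ^ 2) • (y * y1) = 0) :
    y * P - P * y = q ^ 2 • (y1 * B) - (q⁻¹ ^ 2) • (B * y1) := by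
  have e : y * P - P * y - (q ^ 2 • (y1 * B) - (q⁻¹ ^ 2) • (B * y1)) =
    (q⁻¹ ^ 2) • (x * (y1 * y - (q⁻¹ ^ 2) • (y * y1))) - q ^ 2 • ((y1 * y - (q⁻¹ ^ 2) • (y * y1)) * x) := by
    subst eP eB
    clear e1 r
    simp only [mul_add, mul_sub, sub_mul, mul_smul_comm, smul_mul_assoc, mul_assoc, smul_sub]
    match_scalars <;> field_simp <;> ring
  rw [r] at e
  rw [← sub_eq_zero, e]; simp

theorem aux_serre1 (q : K) (hq : q ≠ 0) (x y B : R)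
    (eB : B = y * x - (q⁻¹ ^ 2) • (x * y))
    (S : x ^ 3 * y - (q ^ 2 + 1 + q⁻¹ ^ 2) • (x ^ 2 * y * x)
        + (q ^ 2 + 1 + q⁻¹ ^ 2) • (x * y * x ^ 2) - y * x ^ 3 = 0) :
    x * (B * x - x * B) - (q⁻¹ ^ 2) • ((B * x - x * B) * x) = 0 := by
  rw [← smul_zero (q⁻¹ ^ 2), ← S]
  subst eB
  simp only [pow_succ, pow_zero, one_mul, mul_add, mul_sub, sub_mul, mul_smul_comm, smul_mul_assoc,
    mul_assoc, smul_sub]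
  match_scalars <;> field_simp <;> ring

theorem aux_serre2 (q : K) (hq : q ≠ 0) (x y B : R)
    (eB : B = y * x - (q⁻¹ ^ 2) • (x * y))
    (S : y ^ 3 * x - (q ^ 2 + 1 + q⁻¹ ^ 2) • (y ^ 2 * x * y)
        + (q ^ 2 + 1 + q⁻¹ ^ 2) • (y * x * y ^ 2) - x * y ^ 3 = 0) :
    (y * B - B * y) * y - (q⁻¹ ^ 2) • (y * (y * B - B * y)) = 0 := by
  rw [← smul_zero (-(q⁻¹ ^ 2)), ← S]
  subst eB
  simp only [pow_succ, pow_zero, one_mul, mul_add, mul_sub, sub_mul, mul_smul_comm, smul_mul_assoc,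
    mul_assoc, smul_sub]
  match_scalars <;> field_simp <;> ring

theorem aux_comm (q : K) (hq : q ≠ 0) (h3 : 1 + q ^ 2 + q⁻¹ ^ 2 ≠ 0) (x y B x1 y1 P : R)
    (eB : B = y * x - (q⁻¹ ^ 2) • (x * y)) (e1 : x1 = B * x - x * B) (f1 : y1 = y * B - B * y)
    (eP : P = y * x1 - (q⁻¹ ^ 2) • (x1 * y))
    (fP : P = y1 * x - (q⁻¹ ^ 2) • (x * y1))
    (a : P * x - x * P = q ^ 2 • (B * x1) - (q⁻¹ ^ 2) • (x1 * B))
    (b : y * P - P * y = q ^ 2 • (y1 * B) - (q⁻¹ ^ 2) • (B * y1)) :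
    P * B - B * P = 0 := by
  have k1 : P * B - B * P = (q ^ 2 • (y * B * x1 - (q⁻¹ ^ 2) • (B * x1 * y)) -
      q⁻¹ ^ 2 • (y * x1 * B - (q⁻¹ ^ 2) • (x1 * B * y))) -
      (q ^ 2 • (y1 * B * x - (q⁻¹ ^ 2) • (x * y1 * B)) -
      q⁻¹ ^ 2 • (B * y1 * x - (q⁻¹ ^ 2) • (x * B * y1))) := by
    have : P * B - B * P = (y * (P * x - x * P) - (q⁻¹ ^ 2) • ((P * x - x * P) * y))
       - ((y * P - P * y) * x - (q⁻¹ ^ 2) • (x * (y * P - P * y))) := by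
      rw [eB]
      clear eP fP a b e1 f1
      simp only [mul_sub, sub_mul, mul_smul_comm, smul_mul_assoc, mul_assoc, smul_sub]
      module
    rw [this, a, b]
    clear eP fP a b e1 f1 this
    simp only [mul_sub, sub_mul, mul_smul_comm, smul_mul_assoc, mul_assoc, smul_sub]
    module
  have g1 : y * B = y1 + B * y := by rw [f1]; abel
  have g2 : x * B = B * x - x1 := by rw [e1]; abel
  have m1 : y * x1 = P + (q⁻¹ ^ 2) • (x1 * y) := by rw [eP]; abel
  have m2 : y1 * x = P + (q⁻¹ ^ 2) • (x * y1) := by rw [fP]; abel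
  have t1 : y * B * x1 - (q⁻¹ ^ 2) • (B * x1 * y)
      = y1 * x1 + B * P := by
    rw [g1, add_mul, mul_assoc, m1, mul_add, mul_smul_comm, mul_assoc]; abel
  have t2 : y * x1 * B - (q⁻¹ ^ 2) • (x1 * B * y) = P * B + (q⁻¹ ^ 2) • (x1 * y1) := by
    rw [m1, add_mul, smul_mul_assoc, mul_assoc x1 y, g1, mul_add, mul_assoc x1, smul_add]; abel
  have t3 : B * y1 * x - (q⁻¹ ^ 2) • (x * B * y1) = B * P + (q⁻¹ ^ 2) • (x1 * y1) := by
    rw [mul_assoc, m2, g2, mul_add, mul_smul_comm, sub_mul, smul_sub, mul_assoc B]; abel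
  have t4 : y1 * B * x - (q⁻¹ ^ 2) • (x * y1 * B) = y1 * x1 + P * B := by
    have : B * x = x1 + x * B := by rw [e1]; abel
    rw [mul_assoc, this, mul_add, ← mul_assoc y1 x, m2, add_mul, smul_mul_assoc]; abel
  rw [t1, t2, t3, t4] at k1
  have k2 : (1 + q ^ 2 + q⁻¹ ^ 2) • (P * B - B * P) = 0 := by
    have : (1 + q ^ 2 + q⁻¹ ^ 2) • (P * B - B * P) =
      (P * B - B * P) + (q ^ 2 + q⁻¹ ^ 2) • (P * B - B * P) := by module
    rw [this]
    nth_rw 1 [k1]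
    module
  exact (smul_eq_zero_iff_right h3).1 k2

theorem aux_main (q : K) (hq : q ≠ 0) (h2 : (2 : K) ≠ 0) (h3 : 1 + q ^ 2 + q⁻¹ ^ 2 ≠ 0)
    (h4 : q ^ 2 + q⁻¹ ^ 2 ≠ 0) (x y B x1 x2 x3 : R)
    (S1 : x ^ 3 * y - (q ^ 2 + 1 + q⁻¹ ^ 2) • (x ^ 2 * y * x)
        + (q ^ 2 + 1 + q⁻¹ ^ 2) • (x * y * x ^ 2) - y * x ^ 3 = 0)
    (S2 : y ^ 3 * x - (q ^ 2 + 1 + q⁻¹ ^ 2) • (y ^ 2 * x * y)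
        + (q ^ 2 + 1 + q⁻¹ ^ 2) • (y * x * y ^ 2) - x * y ^ 3 = 0)
    (eB : B = y * x - (q⁻¹ ^ 2) • (x * y)) (e1 : x1 = B * x - x * B)
    (e2 : x2 = B * x1 - x1 * B) (e3 : x3 = B * x2 - x2 * B) :
    x * x1 - (q⁻¹ ^ 2) • (x1 * x) = 0 ∧ x1 * x2 - (q⁻¹ ^ 2) • (x2 * x1) = 0 ∧
    x2 * x3 - (q⁻¹ ^ 2) • (x3 * x2) = 0 := by
  have r0 : x * x1 - (q⁻¹ ^ 2) • (x1 * x) = 0 := by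
    rw [e1]; exact aux_serre1 q hq x y B eB S1
  obtain ⟨y1, f1⟩ : ∃ y1, y1 = y * B - B * y := ⟨_, rfl⟩
  have r0' : y1 * y - (q⁻¹ ^ 2) • (y * y1) = 0 := by
    rw [f1]; exact aux_serre2 q hq x y B eB S2
  obtain ⟨P, eP⟩ : ∃ P, P = y * x1 - (q⁻¹ ^ 2) • (x1 * y) := ⟨_, rfl⟩
  have fP : P = y1 * x - (q⁻¹ ^ 2) • (x * y1) := by
    have : P - (y1 * x - (q⁻¹ ^ 2) • (x * y1))
      = B * (y * x - (q⁻¹ ^ 2) • (x * y)) - (y * x - (q⁻¹ ^ 2) • (x * y)) * B := by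
      rw [eP, e1, f1]
      clear eP e1 f1 e2 e3 eB
      simp only [mul_sub, sub_mul, mul_smul_comm, smul_mul_assoc, mul_assoc, smul_sub]
      module
    rw [← eB, sub_self] at this
    exact sub_eq_zero.1 this
  have a := aux_psi q hq x y B x1 P eB e1 eP r0
  have b := aux_psi' q hq x y B y1 P eB f1 fP r0'
  have c := aux_comm q hq h3 x y B x1 y1 P eB e1 f1 eP fP a b
  obtain ⟨h, eh⟩ : ∃ h, h = (2 : K) • P - (q ^ 2 - q⁻¹ ^ 2) • (B * B) := ⟨_, rfl⟩
  have hB : h * B - B * h = 0 := by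
    have : h * B - B * h = (2 : K) • (P * B - B * P) := by
      rw [eh]
      simp only [mul_sub, sub_mul, mul_smul_comm, smul_mul_assoc, mul_assoc, smul_sub]
      module
    rw [this, c, smul_zero]
  have hx : h * x - x * h = (q ^ 2 + q⁻¹ ^ 2) • x2 := by
    have : h * x - x * h = (2 : K) • (P * x - x * P)
        - (q ^ 2 - q⁻¹ ^ 2) • (B * (B * x - x * B) + (B * x - x * B) * B) := by
      rw [eh]
      simp only [mul_sub, sub_mul, mul_smul_comm, smul_mul_assoc, mul_assoc, smul_sub]
      module
    rw [this, a, ← e1, e2]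
    module
  have hx1 : h * x1 - x1 * h = (q ^ 2 + q⁻¹ ^ 2) • x3 := by
    rw [e3, e1]; exact aux_step _ h B x x2 hB hx
  have r1 := aux_ind _ _ h2 h4 h B x x1 x2 x3 hB e1 e2 e3 hx r0
  exact ⟨r0, r1, aux_ind _ _ h2 h4 h B x1 x2 x3 _ hB e2 e3 rfl hx1 r1⟩

end generic

theorem aux_ne (f : Polynomial ℚ) (h : f.eval 1 ≠ 0) :
    (algebraMap (Polynomial ℚ) F f) ≠ 0 := by
  intro hf
  have : f = 0 := RatFunc.algebraMap_injective ℚ (by rw [hf, map_zero])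
  rw [this] at h
  simp at h

/-- In `U` the elements `v₀, v₁, v₂, v₃` satisfy the q-commutation relations
`v₀v₁ = q⁻²v₁v₀`, `v₁v₂ = q⁻²v₂v₁`, and `v₂v₃ = q⁻²v₃v₂`. -/
theorem stmt0 :
    v0 * v1 = qq ^ (-2 : ℤ) • (v1 * v0) ∧
    v1 * v2 = qq ^ (-2 : ℤ) • (v2 * v1) ∧
    v2 * v3 = qq ^ (-2 : ℤ) • (v3 * v2) := by
  have hq : qq ≠ 0 := RatFunc.X_ne_zero
  have h2 : (2 : F) ≠ 0 := by
    have := aux_ne 2 (by simp)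
    simpa using this
  have n3 : qq ^ 2 + qq ^ 4 + 1 ≠ 0 := by
    have := aux_ne (Polynomial.X ^ 2 + Polynomial.X ^ 4 + 1) (by norm_num)
    simpa [qq] using this
  have n4 : qq ^ 4 + 1 ≠ 0 := by
    have := aux_ne (Polynomial.X ^ 4 + 1) (by norm_num)
    simpa [qq] using this
  have h3 : 1 + qq ^ 2 + qq⁻¹ ^ 2 ≠ 0 := by
    intro h
    apply n3
    have : qq ^ 2 + qq ^ 4 + 1 = qq ^ 2 * (1 + qq ^ 2 + qq⁻¹ ^ 2) := by field_simp
    rw [this, h, mul_zero]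
  have h4 : qq ^ 2 + qq⁻¹ ^ 2 ≠ 0 := by
    intro h
    apply n4
    have : qq ^ 4 + 1 = qq ^ 2 * (qq ^ 2 + qq⁻¹ ^ 2) := by field_simp
    rw [this, h, mul_zero]
  have S1 : E1 ^ 3 * E2 - (qq ^ 2 + 1 + qq⁻¹ ^ 2) • (E1 ^ 2 * E2 * E1)
        + (qq ^ 2 + 1 + qq⁻¹ ^ 2) • (E1 * E2 * E1 ^ 2) - E2 * E1 ^ 3 = 0 := by
    have := RingQuot.mkAlgHom_rel F SerreRel.rel1
    simp only [map_sub, map_add, map_mul, map_pow, map_smul, map_zero, box3] at this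
    exact this
  have S2 : E2 ^ 3 * E1 - (qq ^ 2 + 1 + qq⁻¹ ^ 2) • (E2 ^ 2 * E1 * E2)
        + (qq ^ 2 + 1 + qq⁻¹ ^ 2) • (E2 * E1 * E2 ^ 2) - E1 * E2 ^ 3 = 0 := by
    have := RingQuot.mkAlgHom_rel F SerreRel.rel2
    simp only [map_sub, map_add, map_mul, map_pow, map_smul, map_zero, box3] at this
    exact this
  obtain ⟨B, eB⟩ : ∃ B, B = E2 * E1 - (qq⁻¹ ^ 2) • (E1 * E2) := ⟨_, rfl⟩
  obtain ⟨x1, e1⟩ : ∃ x, x = B * E1 - E1 * B := ⟨_, rfl⟩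
  obtain ⟨x2, e2⟩ : ∃ x, x = B * x1 - x1 * B := ⟨_, rfl⟩
  obtain ⟨x3, e3⟩ : ∃ x, x = B * x2 - x2 * B := ⟨_, rfl⟩
  obtain ⟨c, ec⟩ : ∃ c, c = (qq + qq⁻¹)⁻¹ := ⟨_, rfl⟩
  have hA : Aelt = c • B := by rw [Aelt, eB, ec]
  have w1 : v1 = c • x1 := by
    rw [v1, v0, hA, e1]
    simp only [mul_smul_comm, smul_mul_assoc, smul_sub]
  have w2 : v2 = (c * c) • x2 := by
    rw [v2, w1, hA, e2]
    simp only [mul_smul_comm, smul_mul_assoc, smul_sub, smul_smul]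
  have w3 : v3 = (c * c * c) • x3 := by
    rw [v3, w2, hA, e3]
    simp only [mul_smul_comm, smul_mul_assoc, smul_sub, smul_smul, mul_assoc]
  obtain ⟨r0, r1, r2⟩ := aux_main qq hq h2 h3 h4 E1 E2 B x1 x2 x3 S1 S2 eB e1 e2 e3
  have hz : qq ^ (-2 : ℤ) = qq⁻¹ ^ 2 := by
    rw [zpow_neg, inv_pow]; rfl
  rw [sub_eq_zero] at r0 r1 r2
  rw [hz, w3, w2, w1, v0]
  simp only [mul_smul_comm, smul_mul_assoc, r0, r1, r2, smul_smul]
  refine ⟨?_, ?_, ?_⟩ <;> congr 1 <;> ring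
end
end

section
/- In U the straightening relations v₀v₂ = q⁻²v₂v₀ + (q⁻² − 1)v₁² and v₁v₃ = q⁻²v₃v₁ + (q⁻² − 1)v₂² hold. -/
noncomputable section

set_option linter.unusedSimpArgs false
section aux
variable {K R : Type*} [Field K] [Ring R] [Algebra K R]

theorem aux_key (p : K) (h3 : 1 + p + p ^ 2 ≠ 0) (h4 : 1 + p ^ 2 ≠ 0)
    (X Y A a b c w B : R)
    (hA : Y * X = p • (X * Y) + A)
    (ha : A * X = X * A + a) (hb : A * a = a * A + b) (hc : A * b = b * A + c)
    (hw : Y * A = A * Y + w)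
    (hB : w * X = p • (X * w) + B)
    (s1 : X * a = p • (a * X)) (s2 : w * Y = p • (Y * w)) :
    X * b = p • (b * X) + (p - 1) • (a * a) ∧
    a * c = p • (c * a) + (p - 1) • (b * b) := by
  have D : ∀ x y : R, x = y → A * x - x * A = A * y - y * A := by
    rintro x y rfl; rfl
  have hYa : Y * a = p • (a * Y) + B := by
    linear_combination (norm := (simp only [mul_add, add_mul, mul_sub, sub_mul, smul_mul_assoc, mul_smul_comm, mul_assoc]; module))
      (-1 : K) • (Y * ha) + hw * X - hA * A + A * hA + hB - p • (X * hw) + p • (ha * Y)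
  have hBX : p • (B * X - X * B) = A * a - p ^ 2 • (a * A) := by
    linear_combination (norm := (simp only [mul_add, add_mul, mul_sub, sub_mul, smul_mul_assoc, mul_smul_comm, mul_assoc]; module))
      (-1 : K) • (Y * s1) + hA * a + p • (X * hYa) - p • (hYa * X) - p ^ 2 • (a * hA) + p ^ 2 • (s1 * Y)
  have hBY : p • (B * Y - Y * B) = p ^ 2 • (A * w) - w * A := by
    linear_combination (norm := (simp only [mul_add, add_mul, mul_sub, sub_mul, smul_mul_assoc, mul_smul_comm, mul_assoc]; module))
      (-p) • (hB * Y) + p • (Y * hB) - w * hA + s2 * X + p ^ 2 • (hA * w) - p ^ 2 • (X * s2)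
  have hBA : B * A = A * B := by
    have : (1 + p + p ^ 2) • (B * A - A * B) = 0 := by
      linear_combination (norm := (simp only [mul_add, add_mul, mul_sub, sub_mul, smul_mul_assoc, mul_smul_comm, mul_assoc]; module))
        (-p) • (B * hA) + p • (hA * B) + hBY * X + Y * hBX - p • (hBX * Y) - p • (X * hBY)
          + hw * a + A * hYa - p ^ 2 • (hYa * A) - p ^ 3 • (a * hw) - w * ha - hB * A
          + p ^ 2 • (A * hB) + p ^ 3 • (ha * w)
    exact sub_eq_zero.mp ((smul_eq_zero.mp this).resolve_left h3)
  have r1 : X * b = p • (b * X) + (p - 1) • (a * a) := by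
    linear_combination (norm := (simp only [mul_add, add_mul, mul_sub, sub_mul, smul_mul_assoc, mul_smul_comm, mul_assoc]; module))
      D _ _ s1 - ha * a - X * hb + p • (hb * X) + p • (a * ha)
  have r2 : a * b = p • (b * a) := by
    have hBa : p • (B * a - a * B) = A * b - p ^ 2 • (b * A) := by
      linear_combination (norm := (simp only [mul_add, add_mul, mul_sub, sub_mul, smul_mul_assoc, mul_smul_comm, mul_assoc]; module))
        D _ _ hBX - p • (B * ha) + p • (ha * B) + A * hb - p ^ 2 • (hb * A) + p • (hBA * X) - p • (X * hBA)
    have : (1 + p ^ 2) • (a * b - p • (b * a)) = 0 := by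
      linear_combination (norm := (simp only [mul_add, add_mul, mul_sub, sub_mul, smul_mul_assoc, mul_smul_comm, mul_assoc]; module))
        (-p) • (B * s1) + p • (s1 * B) + hBX * a + X * hBa - p • (hBa * X) - p • (a * hBX)
          + D _ _ r1 - ha * b + p • (hb * a) - p ^ 2 • (a * hb) + p ^ 3 • (b * ha) + (1 - p ^ 2) • (r1 * A)
    exact sub_eq_zero.mp ((smul_eq_zero.mp this).resolve_left h4)
  refine ⟨r1, ?_⟩
  linear_combination (norm := (simp only [mul_add, add_mul, mul_sub, sub_mul, smul_mul_assoc, mul_smul_comm, mul_assoc]; module))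
      D _ _ r2 - hb * b - a * hc + p • (hc * a) + p • (b * hb)
theorem aux_gen (q d : K) (hq : q ≠ 0) (h3 : 1 + (q⁻¹) ^ 2 + ((q⁻¹) ^ 2) ^ 2 ≠ 0)
    (h4 : 1 + ((q⁻¹) ^ 2) ^ 2 ≠ 0) (X Y A a b c : R)
    (hs1 : X ^ 3 * Y - (q ^ 2 + 1 + (q⁻¹) ^ 2) • (X ^ 2 * Y * X)
        + (q ^ 2 + 1 + (q⁻¹) ^ 2) • (X * Y * X ^ 2) - Y * X ^ 3 = 0)
    (hs2 : Y ^ 3 * X - (q ^ 2 + 1 + (q⁻¹) ^ 2) • (Y ^ 2 * X * Y)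
        + (q ^ 2 + 1 + (q⁻¹) ^ 2) • (Y * X * Y ^ 2) - X * Y ^ 3 = 0)
    (hA : A = d • (Y * X - (q⁻¹) ^ 2 • (X * Y)))
    (ha : a = A * X - X * A) (hb : b = A * a - a * A) (hc : c = A * b - b * A) :
    X * b = (q⁻¹) ^ 2 • (b * X) + ((q⁻¹) ^ 2 - 1) • (a * a) ∧
    a * c = (q⁻¹) ^ 2 • (c * a) + ((q⁻¹) ^ 2 - 1) • (b * b) := by
  refine aux_key ((q⁻¹) ^ 2) h3 h4 X (d • Y) A a b c
    (d • Y * A - A * d • Y)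
    ((d • Y * A - A * d • Y) * X - (q⁻¹) ^ 2 • (X * (d • Y * A - A * d • Y)))
    ?_ ?_ ?_ ?_ ?_ ?_ ?_ ?_
  · rw [hA]; simp only [smul_mul_assoc, mul_smul_comm]; module
  · rw [ha]; abel
  · rw [hb]; abel
  · rw [hc]; abel
  · abel
  · abel
  · rw [ha, hA]
    linear_combination (norm := skip) (d * (q⁻¹) ^ 2) • hs1
    simp only [pow_succ, pow_zero, one_mul, mul_add, add_mul, mul_sub, sub_mul, smul_mul_assoc, mul_smul_comm, mul_assoc]
    match_scalars <;> field_simp <;> ring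
  · rw [hA]
    linear_combination (norm := skip) (-d ^ 3 * (q⁻¹) ^ 2) • hs2
    simp only [pow_succ, pow_zero, one_mul, mul_add, add_mul, mul_sub, sub_mul, smul_mul_assoc, mul_smul_comm, mul_assoc]
    match_scalars <;> field_simp <;> ring
end aux

theorem aux_qq : qq ≠ 0 := RatFunc.X_ne_zero

theorem aux_poly (P : Polynomial ℚ) (h : P ≠ 0) : Polynomial.aeval qq P ≠ 0 := by
  have : Polynomial.aeval qq P = algebraMap (Polynomial ℚ) F P := by
    conv_rhs => rw [← Polynomial.aeval_X_left_apply P]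
    rw [← Polynomial.aeval_algebraMap_apply, RatFunc.algebraMap_X]; rfl
  rw [this]
  exact RatFunc.algebraMap_ne_zero h

theorem aux_ne_s1 (P : Polynomial ℚ) (h : P.eval 1 ≠ 0) : Polynomial.aeval qq P ≠ 0 :=
  aux_poly P (by rintro rfl; simp at h)

theorem aux_3 : 1 + (qq⁻¹) ^ 2 + ((qq⁻¹) ^ 2) ^ 2 ≠ 0 := by
  have h := aux_ne_s1 (Polynomial.X ^ 4 + Polynomial.X ^ 2 + 1) (by norm_num)
  have hq := aux_qq
  simp only [map_add, map_pow, Polynomial.aeval_X, map_one] at h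
  intro h0
  apply h
  field_simp at h0
  linear_combination h0

theorem aux_4 : 1 + ((qq⁻¹) ^ 2) ^ 2 ≠ 0 := by
  have h := aux_ne_s1 (Polynomial.X ^ 4 + 1) (by norm_num)
  have hq := aux_qq
  simp only [map_add, map_pow, Polynomial.aeval_X, map_one] at h
  intro h0
  apply h
  field_simp at h0
  linear_combination h0

theorem aux_s1 : E1 ^ 3 * E2 - box3 • (E1 ^ 2 * E2 * E1)
        + box3 • (E1 * E2 * E1 ^ 2) - E2 * E1 ^ 3 = 0 := by
  have := RingQuot.mkAlgHom_rel F SerreRel.rel1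
  simpa [E1, E2] using this

theorem aux_s2 : E2 ^ 3 * E1 - box3 • (E2 ^ 2 * E1 * E2)
        + box3 • (E2 * E1 * E2 ^ 2) - E1 * E2 ^ 3 = 0 := by
  have := RingQuot.mkAlgHom_rel F SerreRel.rel2
  simpa [E1, E2] using this

theorem stmt1 :
    v0 * v2 = qq ^ (-2 : ℤ) • (v2 * v0) + (qq ^ (-2 : ℤ) - 1) • v1 ^ 2 ∧
    v1 * v3 = qq ^ (-2 : ℤ) • (v3 * v1) + (qq ^ (-2 : ℤ) - 1) • v2 ^ 2 := by
  have hz : qq ^ (-2 : ℤ) = (qq⁻¹) ^ 2 := by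
    rw [zpow_neg, inv_pow]; rfl
  rw [hz, pow_two v1, pow_two v2]
  exact aux_gen qq _ aux_qq aux_3 aux_4 E1 E2 Aelt v1 v2 v3 aux_s1 aux_s2 rfl rfl rfl rfl
end
end
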